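/- Coinduction up to congruence for streams: Let R : Stream' ℕ → Stream' ℕ → Prop, and let cl R be the least equivalence relation on Stream' ℕ that contains R and is a congruence for SCons, pointwise addition ⊕, and the shuffle product ⊗; i.e., cl R is the least relation that contains R, is reflexive, symmetric, and transitive, and satisfies: if a = b and cl R xs ys then cl R (SCons a xs) (SCons b ys); if cl R xs ys and cl R xs' ys' then cl R (xs ⊕ xs') (ys ⊕ ys'); and if cl R xs ys and cl R xs' ys' then cl R (xs ⊗ xs') (ys ⊗ ys'). If for all streams s, t, R s t implies head s = head t and cl R (tail s) (tail t), then for all streams s, t, R s t implies s = t. -/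

import Mathlib

open Stream'

/-- Pointwise addition of streams. -/
def sadd (xs ys : Stream' ℕ) : Stream' ℕ := fun n => xs.get n + ys.get n

/-- Shuffle product of streams (binomial convolution). -/
def sshuffle (xs ys : Stream' ℕ) : Stream' ℕ :=
  fun n => ∑ k ∈ Finset.range (n + 1), n.choose k * xs.get k * ys.get (n - k)

infixl:65 " ⊕ " => sadd
infixl:70 " ⊗ " => sshuffle

/-- The least equivalence relation containing `R` that is a congruence for
`Stream'.cons`, pointwise addition `⊕`, and the shuffle product `⊗`. -/
inductive cl (R : Stream' ℕ → Stream' ℕ → Prop) : Stream' ℕ → Stream' ℕ → Prop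
  | base {s t} : R s t → cl R s t
  | refl (s) : cl R s s
  | symm {s t} : cl R s t → cl R t s
  | trans {s t u} : cl R s t → cl R t u → cl R s u
  | cons {a b : ℕ} {xs ys} : a = b → cl R xs ys →
      cl R (Stream'.cons a xs) (Stream'.cons b ys)
  | add {xs ys xs' ys'} : cl R xs ys → cl R xs' ys' → cl R (xs ⊕ xs') (ys ⊕ ys')
  | mul {xs ys xs' ys'} : cl R xs ys → cl R xs' ys' → cl R (xs ⊗ xs') (ys ⊗ ys')

theorem cl_agree (R : Stream' ℕ → Stream' ℕ → Prop)
    (h : ∀ s t, R s t → s.head = t.head ∧ cl R s.tail t.tail) (n : ℕ) :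
    ∀ s t, cl R s t → ∀ k, k < n → s.get k = t.get k := by
  induction n with
  | zero => intro s t _ k hk; omega
  | succ n ih =>
    intro s t hst
    induction hst with
    | base hR =>
      intro k hk
      cases k with
      | zero => exact (h _ _ hR).1
      | succ k => exact ih _ _ (h _ _ hR).2 k (by omega)
    | refl s => intro k _; rfl
    | symm _ ih1 => intro k hk; exact (ih1 k hk).symm
    | trans _ _ ih1 ih2 => intro k hk; exact (ih1 k hk).trans (ih2 k hk)
    | cons hab _ ih1 =>
      intro k hk
      cases k with
      | zero => exact hab
      | succ k => exact ih1 k (by omega)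
    | add _ _ ih1 ih2 =>
      intro k hk
      exact congrArg₂ (· + ·) (ih1 k hk) (ih2 k hk)
    | mul _ _ ih1 ih2 =>
      intro k hk
      simp only [sshuffle, Stream'.get]
      refine Finset.sum_congr rfl fun j hj => ?_
      have hj' := Finset.mem_range.mp hj
      have e1 := ih1 j (by omega)
      have e2 := ih2 (k - j) (by omega)
      simp only [Stream'.get] at e1 e2
      rw [e1, e2]

theorem stmt_19 (R : Stream' ℕ → Stream' ℕ → Prop)
    (h : ∀ s t, R s t → s.head = t.head ∧ cl R s.tail t.tail) :
    ∀ s t, R s t → s = t := by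
  intro s t hR
  exact Stream'.ext fun n => cl_agree R h (n + 1) s t (cl.base hR) n (Nat.lt_succ_self n)
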